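/- Let n = #{d ∈ 𝔽_q^* : Tr(d²) = 0} be the length of the code C_D with defining set D = {d ∈ 𝔽_q^* : Tr(d²) = 0}. If m is even, then (as complex numbers) n = p^{m−1} + p^{−1}(p−1)G − 1; if m is odd, then n = p^{m−1} − 1. -/

import Mathlib

open Finset
open scoped Classical

noncomputable section

/-- `ζ_p = exp(2πi/p)`. -/
def zeta (p : ℕ) : ℂ := Complex.exp (2 * Real.pi * Complex.I / p)

/-- The canonical additive character of `ℤ/p`: `χ̄₁(c) = ζ_p^c`. -/
def chiBar (p : ℕ) (c : ZMod p) : ℂ := zeta p ^ c.val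

/-- The quadratic character of `(ℤ/p)^*`, extended by `η̄(0) = 0`. -/
def etaBar (p : ℕ) (c : ZMod p) : ℂ :=
  if c = 0 then 0 else if IsSquare c then 1 else -1

/-- The quadratic character of `F^*`, extended by `η(0) = 0`. -/
def etaQ (F : Type) [Field F] (x : F) : ℂ :=
  if x = 0 then 0 else if IsSquare x then 1 else -1

/-- The absolute trace map from `F` to `ℤ/p`. -/
def Trq (p : ℕ) (F : Type) [Field F] [Algebra (ZMod p) F] (x : F) : ZMod p :=
  Algebra.trace (ZMod p) F x

/-- The canonical additive character of `F`: `χ₁(x) = ζ_p^{Tr x}`. -/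
def chiQ (p : ℕ) (F : Type) [Field F] [Algebra (ZMod p) F] (x : F) : ℂ :=
  chiBar p (Trq p F x)

/-- The quadratic Gauss sum `G` over `F`. -/
def GaussQ (p : ℕ) (F : Type) [Field F] [Fintype F] [Algebra (ZMod p) F] : ℂ :=
  ∑ x ∈ univ.filter (fun x : F => x ≠ 0), etaQ F x * chiQ p F x

/-- The quadratic Gauss sum `Ḡ` over `ℤ/p`. -/
def GaussP (p : ℕ) [NeZero p] : ℂ :=
  ∑ y ∈ univ.filter (fun y : ZMod p => y ≠ 0), etaBar p y * chiBar p y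

/-- Write the additive character of `ZMod p`. -/
def psi0 (p : ℕ) [Fact (Nat.Prime p)] : AddChar (ZMod p) ℂ :=
  AddChar.zmodChar p (ζ := zeta p) (Complex.isPrimitiveRoot_exp p (NeZero.ne p)).pow_eq_one

lemma psi0_apply (p : ℕ) [Fact (Nat.Prime p)] (c : ZMod p) : psi0 p c = chiBar p c := rfl

lemma psi0_prim (p : ℕ) [Fact (Nat.Prime p)] : (psi0 p).IsPrimitive :=
  AddChar.zmodChar_primitive_of_primitive_root p (Complex.isPrimitiveRoot_exp p (NeZero.ne p))

/-- The additive character of `F`. -/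
def psiF (p : ℕ) [Fact (Nat.Prime p)] (F : Type) [Field F] [Algebra (ZMod p) F] : AddChar F ℂ :=
  (psi0 p).compAddMonoidHom (Algebra.trace (ZMod p) F).toAddMonoidHom

lemma psiF_apply (p : ℕ) [Fact (Nat.Prime p)] (F : Type) [Field F] [Algebra (ZMod p) F] (x : F) :
    psiF p F x = chiQ p F x := rfl

lemma psiF_ne_one (p : ℕ) [Fact (Nat.Prime p)] (F : Type) [Field F] [Fintype F]
    [Algebra (ZMod p) F] : psiF p F ≠ 1 := by
  intro h
  have hs := Algebra.trace_surjective (ZMod p) F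
  obtain ⟨x, hx⟩ := hs 1
  have h1 : psiF p F x = 1 := by rw [h]; rfl
  have h2 : psi0 p 1 = 1 := by rw [← hx]; exact h1
  have := (AddChar.IsPrimitive.zmod_char_eq_one_iff p (psi0_prim p) 1).1 h2
  exact one_ne_zero this

lemma etaQ_eq (F : Type) [Field F] [Fintype F] (x : F) :
    etaQ F x = (quadraticChar F x : ℂ) := by
  unfold etaQ
  rw [quadraticChar_apply, quadraticCharFun]
  split_ifs <;> simp

lemma ringChar_ne (p : ℕ) [Fact (Nat.Prime p)] (hp : Odd p) (F : Type) [Field F]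
    [Algebra (ZMod p) F] : ringChar F ≠ 2 := by
  have : CharP F p := charP_of_injective_algebraMap (algebraMap (ZMod p) F).injective p
  rw [ringChar.eq F p]
  rintro rfl
  exact absurd hp (by decide)

lemma gauss_eq (p : ℕ) [Fact (Nat.Prime p)] (F : Type) [Field F] [Fintype F]
    [Algebra (ZMod p) F] : GaussQ p F = ∑ x : F, (quadraticChar F x : ℂ) * psiF p F x := by
  unfold GaussQ
  rw [Finset.sum_filter]
  refine Finset.sum_congr rfl fun x _ => ?_
  rw [etaQ_eq, psiF_apply]
  by_cases h : x = 0 <;> simp [h]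

/-- Fibering over squares. -/
lemma sum_sq (F : Type) [Field F] [Fintype F] (hF : ringChar F ≠ 2) (f : F → ℂ) :
    ∑ d : F, f (d ^ 2) = ∑ a : F, ((quadraticChar F a : ℂ) + 1) * f a := by
  rw [← Finset.sum_fiberwise (s := univ) (g := fun d : F => d ^ 2)]
  refine Finset.sum_congr rfl fun a _ => ?_
  have h := quadraticChar_card_sqrts hF a
  have h2 : ∑ d ∈ univ.filter (fun d : F => d ^ 2 = a), f (d ^ 2)
      = ∑ d ∈ univ.filter (fun d : F => d ^ 2 = a), f a := by
    refine Finset.sum_congr rfl fun d hd => ?_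
    rw [(Finset.mem_filter.1 hd).2]
  rw [h2, Finset.sum_const, nsmul_eq_mul]
  congr 1
  have h3 : ({x : F | x ^ 2 = a} : Set F).toFinset = univ.filter (fun d : F => d ^ 2 = a) := by
    ext; simp
  rw [h3] at h
  exact_mod_cast h

lemma gauss_inner_sum (p : ℕ) [Fact (Nat.Prime p)] (hp : Odd p) (F : Type) [Field F] [Fintype F]
    [Algebra (ZMod p) F] (b : F) (hb : b ≠ 0) :
    ∑ d : F, psiF p F (b * d ^ 2) = (quadraticChar F b : ℂ) * GaussQ p F := by
  rw [sum_sq F (ringChar_ne p hp F) (fun a => psiF p F (b * a))]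
  simp only [add_mul, one_mul, Finset.sum_add_distrib]
  have e : ∑ a : F, psiF p F (b * a) = 0 := by
    rw [Fintype.sum_bijective (fun a => b * a) (mulLeft_bijective₀ b hb) _ (psiF p F) (fun _ => rfl)]
    exact AddChar.sum_eq_zero_of_ne_one (psiF_ne_one p F)
  rw [e, add_zero, gauss_eq,
    ← Fintype.sum_bijective (fun a => b * a) (mulLeft_bijective₀ b hb)
      (fun a => (quadraticChar F (b * a) : ℂ) * psiF p F (b * a))
      (fun a => (quadraticChar F a : ℂ) * psiF p F a) (fun _ => rfl),
    Finset.mul_sum]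
  refine Finset.sum_congr rfl fun a _ => ?_
  have h := quadraticChar_sq_one hb
  have h' : (quadraticChar F b : ℂ) ^ 2 = 1 := by exact_mod_cast h
  rw [map_mul (quadraticChar F)]
  push_cast
  linear_combination (-(quadraticChar F a : ℂ) * psiF p F (b * a)) * h'

lemma key (p : ℕ) [Fact (Nat.Prime p)] (hp : Odd p) (F : Type) [Field F] [Fintype F]
    [Algebra (ZMod p) F] :
    (p : ℂ) * (((univ.filter (fun d : F => d ≠ 0 ∧ Trq p F (d ^ 2) = 0)).card : ℕ) + 1 : ℂ)
      = Fintype.card F + (∑ y : ZMod p, (quadraticChar F (algebraMap (ZMod p) F y) : ℂ))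
        * GaussQ p F := by
  have h1 : ((univ.filter (fun d : F => d ≠ 0 ∧ Trq p F (d ^ 2) = 0)).card + 1 : ℂ)
      = ((univ.filter (fun d : F => Trq p F (d ^ 2) = 0)).card : ℂ) := by
    have : univ.filter (fun d : F => Trq p F (d ^ 2) = 0)
        = insert 0 (univ.filter (fun d : F => d ≠ 0 ∧ Trq p F (d ^ 2) = 0)) := by
      ext d
      simp only [Finset.mem_filter, Finset.mem_insert, Finset.mem_univ, true_and]
      by_cases h : d = 0 <;> simp [h, Trq]
    rw [this, Finset.card_insert_of_notMem (by simp)]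
    push_cast
    rfl
  have h2 : (p : ℂ) * ((univ.filter (fun d : F => Trq p F (d ^ 2) = 0)).card : ℂ)
      = ∑ d : F, ∑ y : ZMod p, psiF p F (algebraMap (ZMod p) F y * d ^ 2) := by
    have h3 : ∀ d : F, ∑ y : ZMod p, psiF p F (algebraMap (ZMod p) F y * d ^ 2)
        = if Trq p F (d ^ 2) = 0 then (p : ℂ) else 0 := by
      intro d
      have := AddChar.sum_mulShift (Trq p F (d ^ 2)) (psi0_prim p)
      rw [ZMod.card] at this
      push_cast at this
      rw [← this]
      refine Finset.sum_congr rfl fun y _ => ?_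
      change psi0 p (Algebra.trace (ZMod p) F _) = psi0 p (y * Algebra.trace (ZMod p) F _)
      rw [← Algebra.smul_def, map_smul, smul_eq_mul]
    simp only [h3]
    rw [← Finset.sum_filter, Finset.sum_const, nsmul_eq_mul, mul_comm]
  rw [h1, h2, Finset.sum_comm, Finset.sum_mul, ← Finset.add_sum_erase univ _ (mem_univ (0 : ZMod p)),
    ← Finset.add_sum_erase univ (fun y => _ * GaussQ p F) (mem_univ (0 : ZMod p))]
  simp only [map_zero, zero_mul, AddChar.map_zero_eq_one, Finset.sum_const, Finset.card_univ,
    nsmul_eq_mul, mul_one, Int.cast_zero, zero_add, MulChar.map_zero]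
  congr 1
  refine Finset.sum_congr rfl fun y hy => ?_
  refine gauss_inner_sum p hp F _ ?_
  simpa using Finset.ne_of_mem_erase hy

lemma geom_aux (p m : ℕ) (hp : Odd p) : ∃ k, p ^ m / 2 = p / 2 * k ∧ (Even k ↔ Even m) := by
  obtain ⟨r, rfl⟩ := hp
  refine ⟨∑ i ∈ range m, (2 * r + 1) ^ i, ?_, ?_⟩
  · have : (2 * r + 1) ^ m = 2 * (r * ∑ i ∈ range m, (2 * r + 1) ^ i) + 1 := by
      induction m with
      | zero => simp
      | succ n ih => rw [Finset.sum_range_succ, pow_succ, mul_add r, mul_add 2]; nlinarith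
    rw [this]
    have e : (2 * r + 1) / 2 = r := by omega
    rw [e]; omega
  · induction m with
    | zero => simp
    | succ n ih =>
      have : ¬ Even ((2 * r + 1) ^ n) := by
        rw [Nat.not_even_iff_odd]; exact Odd.pow ⟨r, rfl⟩
      rw [Finset.sum_range_succ, Nat.even_add, ih, Nat.even_add_one]
      tauto

lemma quad_base (p m : ℕ) [Fact (Nat.Prime p)] (hp : Odd p) (F : Type) [Field F] [Fintype F]
    [Algebra (ZMod p) F] (hq : Fintype.card F = p ^ m) (y : ZMod p) (hy : y ≠ 0) :
    quadraticChar F (algebraMap (ZMod p) F y) = quadraticChar (ZMod p) y ^ m := by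
  have hF := ringChar_ne p hp F
  have hZ := ringChar_ne p hp (ZMod p)
  obtain ⟨k, hk, hkm⟩ := geom_aux p m hp
  have h1 := quadraticChar_eq_pow_of_char_ne_two' hF (algebraMap (ZMod p) F y)
  have h2 := quadraticChar_eq_pow_of_char_ne_two' hZ y
  rw [ZMod.card] at h2
  rw [hq, hk, pow_mul, ← map_pow, ← h2, map_intCast] at h1
  have hy' : algebraMap (ZMod p) F y ≠ 0 := by simpa using hy
  have hne : (-1 : F) ≠ 1 := Ring.neg_one_ne_one_of_char_ne_two hF
  have hkm' : quadraticChar (ZMod p) y ^ k = quadraticChar (ZMod p) y ^ m := by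
    rcases quadraticChar_dichotomy hy with h | h <;> rw [h]
    · simp
    · rcases Nat.even_or_odd m with hm | hm
      · rw [hm.neg_one_pow, (hkm.2 hm).neg_one_pow]
      · have : Odd k := by rw [← Nat.not_even_iff_odd, hkm, Nat.not_even_iff_odd]; exact hm
        rw [hm.neg_one_pow, this.neg_one_pow]
  rw [← hkm']
  rw [← Int.cast_pow] at h1
  have hd : quadraticChar (ZMod p) y ^ k = 1 ∨ quadraticChar (ZMod p) y ^ k = -1 := by
    rcases quadraticChar_dichotomy hy with h | h <;> rw [h]
    · simp
    · exact neg_one_pow_eq_or ℤ k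
  rcases quadraticChar_dichotomy hy' with h | h <;> rcases hd with h' | h' <;>
    rw [h, h'] at h1 ⊢ <;> push_cast at h1
  · exact absurd h1.symm hne
  · exact absurd h1 hne

theorem code_length (p m : ℕ) [Fact (Nat.Prime p)] (hp : Odd p)
    (F : Type) [Field F] [Fintype F] [Algebra (ZMod p) F]
    (hm : 0 < m) (hq : Fintype.card F = p ^ m) :
    (Even m →
      (((univ.filter (fun d : F => d ≠ 0 ∧ Trq p F (d ^ 2) = 0)).card : ℕ) : ℂ) = (p : ℂ) ^ ((m : ℤ) - 1 : ℤ) + (p : ℂ)⁻¹ * ((p : ℂ) - 1) * GaussQ p F - 1) ∧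
    (Odd m →
      (((univ.filter (fun d : F => d ≠ 0 ∧ Trq p F (d ^ 2) = 0)).card : ℕ) : ℂ) = (p : ℂ) ^ ((m : ℤ) - 1 : ℤ) - 1) := by
  have hk := key p hp F
  have hp0 : (p : ℂ) ≠ 0 := by exact_mod_cast NeZero.ne p
  have hq' : (Fintype.card F : ℂ) = p * (p : ℂ) ^ ((m : ℤ) - 1 : ℤ) := by
    rw [hq, zpow_sub_one₀ hp0]
    push_cast
    rw [zpow_natCast]
    field_simp
  have hs : ∀ y : ZMod p, (quadraticChar F (algebraMap (ZMod p) F y) : ℂ)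
      = (quadraticChar (ZMod p) y : ℂ) ^ m := by
    intro y
    by_cases hy : y = 0
    · simp [hy, hm.ne']
    · rw [quad_base p m hp F hq y hy]; push_cast; rfl
  simp only [hs] at hk
  rw [hq'] at hk
  constructor
  · intro he
    have hsum : ∑ y : ZMod p, (quadraticChar (ZMod p) y : ℂ) ^ m = (p : ℂ) - 1 := by
      have : ∀ y : ZMod p, (quadraticChar (ZMod p) y : ℂ) ^ m = 1 - if y = 0 then 1 else 0 := by
        intro y
        by_cases hy : y = 0
        · simp [hy, hm.ne']
        · rcases quadraticChar_dichotomy hy with h | h <;> simp [h, hy, he.neg_one_pow]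
      simp only [this, Finset.sum_sub_distrib]
      simp
    rw [hsum] at hk
    field_simp
    linear_combination hk
  · intro ho
    have hsum : ∑ y : ZMod p, (quadraticChar (ZMod p) y : ℂ) ^ m = 0 := by
      have h0 := quadraticChar_sum_zero (ringChar_ne p hp (ZMod p))
      have h0' : ∑ y : ZMod p, (quadraticChar (ZMod p) y : ℂ) = 0 := by exact_mod_cast h0
      rw [← h0']
      refine Finset.sum_congr rfl fun y _ => ?_
      by_cases hy : y = 0
      · simp [hy, hm.ne']
      · rcases quadraticChar_dichotomy hy with h | h <;> simp [h, ho.neg_one_pow]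
    rw [hsum, zero_mul, add_zero] at hk
    have := mul_left_cancel₀ hp0 hk
    linear_combination this
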